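/- arXiv:2102.03855 — 2 statements merged into one kernel-verified Lean document; each statement's English description precedes it below -/
import Mathlib

section
/- For every integer n ≥ 6, ρ(L_{n,1}) > ρ(Γ_{n,2}), where ρ denotes the spectral radius. -/
open SimpleGraph

/-- `G` contains a cycle of length `l`. -/
def HasCycleLen {V : Type} (G : SimpleGraph V) (l : ℕ) : Prop :=
  ∃ (v : V) (c : G.Walk v v), c.IsCycle ∧ c.length = l

/-- The circumference of `G`: the length of a longest cycle. -/
noncomputable def circumference {V : Type} (G : SimpleGraph V) : ℕ :=
  sSup {l | HasCycleLen G l}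

/-- `G` is weakly pancyclic with girth 3: it contains a cycle of every length `l`
with `3 ≤ l ≤ c(G)`. -/
def WeaklyPancyclic3 {V : Type} (G : SimpleGraph V) : Prop :=
  HasCycleLen G 3 ∧ ∀ l : ℕ, 3 ≤ l → l ≤ circumference G → HasCycleLen G l

/-- The number of edges of `G`. -/
noncomputable def edgeCount {V : Type} (G : SimpleGraph V) : ℕ :=
  Nat.card G.edgeSet

/-- The degree of `v` in `G`. -/
noncomputable def degCount {V : Type} (G : SimpleGraph V) (v : V) : ℕ :=
  Nat.card (G.neighborSet v)

/-- The spectral radius of `G`: the largest eigenvalue of the adjacency matrix. -/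
noncomputable def specRad {V : Type} [Finite V] (G : SimpleGraph V) : ℝ :=
  letI := Fintype.ofFinite V
  letI := Classical.decEq V
  letI := Classical.decRel G.Adj
  sSup (spectrum ℝ (G.adjMatrix ℝ))

/-- The signless Laplacian spectral radius of `G`: the largest eigenvalue of `D(G) + A(G)`. -/
noncomputable def qSpecRad {V : Type} [Finite V] (G : SimpleGraph V) : ℝ :=
  letI := Fintype.ofFinite V
  letI := Classical.decEq V
  letI := Classical.decRel G.Adj
  sSup (spectrum ℝ (Matrix.diagonal (fun v => (degCount G v : ℝ)) + G.adjMatrix ℝ))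

/-- `L_{n,k} = K_1 ∨ (K_{n-k-1} + K_k)`: vertex `0` is the common vertex of a clique on
the `n - k` vertices `{0, …, n-k-1}` and a clique on the `k+1` vertices `{0} ∪ {n-k, …, n-1}`. -/
def Lgraph (n k : ℕ) : SimpleGraph (Fin n) :=
  SimpleGraph.fromRel (fun u v =>
    u.val = 0 ∨ v.val = 0 ∨ (u.val < n - k ∧ v.val < n - k) ∨
      (n - k ≤ u.val ∧ n - k ≤ v.val))

/-- `Γ_{n,t} = K_2 ∨ (K_{n-2-t} + t·K_1)`: vertices `0,1` are joined to everything,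
vertices `2, …, n-t-1` form a clique, and vertices `n-t, …, n-1` are independent. -/
def GammaGraph (n t : ℕ) : SimpleGraph (Fin n) :=
  SimpleGraph.fromRel (fun u v =>
    u.val < 2 ∨ v.val < 2 ∨ (u.val < n - t ∧ v.val < n - t))

/-- `F` is a member of the family `F_{n,k}`: there is a clique `K` on `n - k` vertices
such that each connected component of `F - K` is a clique all of whose vertices are
adjacent to one single common vertex of `K` and to no other vertex of `K`. -/
def MemF (n k : ℕ) (F : SimpleGraph (Fin n)) : Prop :=
  ∃ K : Finset (Fin n), K.card = n - k ∧ F.IsClique (↑K : Set (Fin n)) ∧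
    (∀ u v : ({x : Fin n | x ∉ K} : Set (Fin n)),
      (F.induce {x : Fin n | x ∉ K}).Reachable u v → (u = v ∨ F.Adj u.1 v.1)) ∧
    (∀ u : ({x : Fin n | x ∉ K} : Set (Fin n)), ∃! w : Fin n, w ∈ K ∧ F.Adj u.1 w) ∧
    (∀ u v : ({x : Fin n | x ∉ K} : Set (Fin n)),
      (F.induce {x : Fin n | x ∉ K}).Reachable u v →
        ∀ w ∈ K, F.Adj u.1 w → F.Adj v.1 w)

/-- `G` is a subgraph of `H` (up to relabelling): there is an injective graph
homomorphism from `G` to `H`. -/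
def IsSubgraphOf {n : ℕ} (G H : SimpleGraph (Fin n)) : Prop :=
  ∃ f : G →g H, Function.Injective f

/-!
Since `L_{n,1}` contains a clique on `n - 1` vertices, its spectral radius is at least `n - 2`. The
graph `Γ_{n,2}` has `m = C(n - 2, 2) + 4` edges and no isolated vertex, so Hong's bound
`ρ ≤ √(2m - n + 1)` gives `ρ(Γ_{n,2})² ≤ (n - 2)² - (2n - 11)`.

Hong's bound follows from Gershgorin's theorem for the square of the adjacency matrix. The row sum
of the square at `v` is the sum of the degrees of the neighbours of `v`; among the other vertices,
`v` contributes `d(v)` to the total `2m` and each of the remaining `n - 1 - d(v)` at least `1`.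
-/

open Finset Matrix

section Spectrum

variable {ι : Type*} [Fintype ι] [DecidableEq ι] {A : Matrix ι ι ℝ}

theorem exists_le_sum_of_mem_spectrum (hA : ∀ i j, i ≠ j → 0 ≤ A i j) {μ : ℝ}
    (hμ : μ ∈ spectrum ℝ A) : ∃ i, μ ≤ ∑ j, A i j := by
  rw [← Matrix.spectrum_toLin', ← Module.End.hasEigenvalue_iff_mem_spectrum] at hμ
  obtain ⟨i, hi⟩ := eigenvalue_mem_ball hμ
  refine ⟨i, ?_⟩
  calc μ = A i i + (μ - A i i) := by ring
    _ ≤ A i i + ∑ j ∈ univ.erase i, ‖A i j‖ := by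
      gcongr
      exact (le_abs_self _).trans (Metric.mem_closedBall.mp hi)
    _ = A i i + ∑ j ∈ univ.erase i, A i j := by
      congr 1
      exact sum_congr rfl fun j hj => Real.norm_of_nonneg (hA i j (ne_of_mem_erase hj).symm)
    _ = ∑ j, A i j := add_sum_erase _ _ (mem_univ i)

theorem dotProduct_mulVec_le_sSup_spectrum (hA : A.IsHermitian) (x : ι → ℝ) :
    x ⬝ᵥ A *ᵥ x ≤ sSup (spectrum ℝ A) * (x ⬝ᵥ x) := by
  have hpsd : (algebraMap ℝ (Matrix ι ι ℝ) (sSup (spectrum ℝ A)) - A).PosSemidef := by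
    rw [posSemidef_iff_isHermitian_and_spectrum_nonneg, ← spectrum.singleton_sub_eq]
    refine ⟨(isHermitian_diagonal _).sub hA, ?_⟩
    rintro _ ⟨_, rfl, μ, hμ, rfl⟩
    exact sub_nonneg.mpr (le_csSup A.finite_real_spectrum.bddAbove hμ)
  have hquad := hpsd.dotProduct_mulVec_nonneg x
  simpa [Algebra.algebraMap_eq_smul_one, sub_mulVec, smul_mulVec, dotProduct_sub] using hquad

end Spectrum

section Counting

variable {V : Type*} [Fintype V] {G : SimpleGraph V} [DecidableRel G.Adj]

theorem sum_adjMatrix_sq_apply [DecidableEq V] {R : Type*} [Semiring R] (v : V) :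
    ∑ w, (G.adjMatrix R ^ 2) v w = ∑ u ∈ G.neighborFinset v, (G.degree u : R) := by
  simp_rw [pow_two, adjMatrix_mul_apply]
  rw [sum_comm]
  refine sum_congr rfl fun u _ => ?_
  simp [adjMatrix_apply, ← neighborFinset_eq_filter]

theorem sum_neighborFinset_degree_add_card_le (hG : ∀ v, ¬ G.IsIsolated v) (v : V) :
    ∑ u ∈ G.neighborFinset v, G.degree u + Fintype.card V ≤ 2 * #G.edgeFinset + 1 := by
  classical
  have hpos (u : V) : 1 ≤ G.degree u := (G.degree_pos u).mpr (hG u)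
  have hnonadj : G.degree v + #(G.neighborFinset v)ᶜ ≤
      ∑ u ∈ (G.neighborFinset v)ᶜ, G.degree u + 1 := by
    have hv : v ∈ (G.neighborFinset v)ᶜ := by simp
    have hrest := card_nsmul_le_sum ((G.neighborFinset v)ᶜ.erase v) (G.degree ·) 1
      fun u _ => hpos u
    rw [smul_eq_mul, mul_one] at hrest
    rw [← add_sum_erase _ _ hv, ← card_erase_add_one hv]
    lia
  have hcard := card_add_card_compl (G.neighborFinset v)
  have hsum := sum_add_sum_compl (G.neighborFinset v) (G.degree ·)
  rw [sum_degrees_eq_twice_card_edges] at hsum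
  rw [card_neighborFinset_eq_degree] at hcard
  lia

theorem card_edgeFinset_le_of_forall_adj [DecidableEq V] {s c : Finset V}
    (h : ∀ u v, G.Adj u v → u ∈ s ∧ v ∈ s ∨ u ∈ c ∧ v ∉ s ∨ v ∈ c ∧ u ∉ s) :
    #G.edgeFinset ≤ (#s).choose 2 + #c * #sᶜ := by
  have hcover : G.edgeFinset ⊆
      s.offDiag.image Sym2.mk.uncurry ∪ (c ×ˢ sᶜ).image Sym2.mk.uncurry := by
    refine Sym2.ind fun u v he => ?_
    rw [mem_edgeFinset, mem_edgeSet] at he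
    obtain ⟨hu, hv⟩ | ⟨hu, hv⟩ | ⟨hv, hu⟩ := h u v he
    · exact mem_union_left _ (mem_image.mpr ⟨(u, v), mem_offDiag.mpr ⟨hu, hv, he.ne⟩, rfl⟩)
    · exact mem_union_right _
        (mem_image.mpr ⟨(u, v), mk_mem_product hu (mem_compl.mpr hv), rfl⟩)
    · exact mem_union_right _
        (mem_image.mpr ⟨(v, u), mk_mem_product hv (mem_compl.mpr hu), Sym2.eq_swap⟩)
  calc #G.edgeFinset
      ≤ #(s.offDiag.image Sym2.mk.uncurry) + #((c ×ˢ sᶜ).image Sym2.mk.uncurry) :=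
        (card_le_card hcover).trans (card_union_le _ _)
    _ ≤ (#s).choose 2 + #c * #sᶜ := by
        rw [← card_product]
        exact add_le_add (Sym2.card_image_offDiag s).le card_image_le

end Counting

section SpectralRadius

variable {V : Type} {G : SimpleGraph V}

theorem specRad_eq_sSup_spectrum [Fintype V] [DecidableEq V] [DecidableRel G.Adj] :
    specRad G = sSup (spectrum ℝ (G.adjMatrix ℝ)) := by
  unfold specRad
  congr!

theorem natCast_le_specRad_of_isNClique [Finite V] {s : Finset V} {m : ℕ}
    (hs : G.IsNClique (m + 1) s) : (m : ℝ) ≤ specRad G := by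
  classical
  cases nonempty_fintype V
  set x : V → ℝ := fun v => if v ∈ s then 1 else 0 with hx
  have hnorm : x ⬝ᵥ x = m + 1 := by
    simp [hx, dotProduct, hs.card_eq]
  have hrow : ∀ v ∈ s, (G.adjMatrix ℝ *ᵥ x) v = m := by
    intro v hv
    have hnbr : G.neighborFinset v ∩ s = s.erase v := by
      ext u
      simp only [mem_inter, mem_neighborFinset, mem_erase]
      exact ⟨fun h => ⟨h.1.ne', h.2⟩, fun h => ⟨hs.isClique hv h.2 h.1.symm, h.2⟩⟩
    simp [hx, adjMatrix_mulVec_apply, sum_ite_mem, hnbr, card_erase_of_mem hv, hs.card_eq]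
  have hquad : x ⬝ᵥ G.adjMatrix ℝ *ᵥ x = m * (m + 1) := by
    calc x ⬝ᵥ G.adjMatrix ℝ *ᵥ x = ∑ v ∈ s, (G.adjMatrix ℝ *ᵥ x) v := by
          simp only [hx, dotProduct, ite_mul, one_mul, zero_mul, sum_ite_mem, univ_inter]
      _ = m * (m + 1) := by
          rw [sum_congr rfl hrow, sum_const, hs.card_eq, nsmul_eq_mul, Nat.cast_succ, mul_comm]
  have hrayleigh := dotProduct_mulVec_le_sSup_spectrum (G.isHermitian_adjMatrix (R := ℝ)) x
  rw [← specRad_eq_sSup_spectrum, hnorm, hquad] at hrayleigh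
  exact le_of_mul_le_mul_right hrayleigh (by positivity)

theorem specRad_le_sqrt_two_mul_card_edgeFinset [Fintype V] [DecidableRel G.Adj]
    (hG : ∀ v, ¬ G.IsIsolated v) :
    specRad G ≤ √(2 * #G.edgeFinset - Fintype.card V + 1) := by
  classical
  rw [specRad_eq_sSup_spectrum]
  refine Real.sSup_le (fun μ hμ => Real.le_sqrt_of_sq_le ?_) (Real.sqrt_nonneg _)
  have hnonneg (u w : V) : 0 ≤ (G.adjMatrix ℝ ^ 2) u w := by
    simp [adjMatrix_pow_apply_eq_card_walk]
  obtain ⟨v, hv⟩ := exists_le_sum_of_mem_spectrum (fun u w _ => hnonneg u w)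
    (spectrum.pow_mem_pow _ 2 hμ)
  rw [sum_adjMatrix_sq_apply] at hv
  have hdeg : ∑ u ∈ G.neighborFinset v, (G.degree u : ℝ) + Fintype.card V ≤
      2 * #G.edgeFinset + 1 := mod_cast sum_neighborFinset_degree_add_card_le hG v
  linarith

end SpectralRadius

theorem isNClique_lgraph (n k : ℕ) : (Lgraph n k).IsNClique (n - k) {v | v.val < n - k} := by
  refine ⟨fun u hu v hv huv => ?_, ?_⟩
  · rw [coe_filter_univ, Set.mem_ofPred_eq] at hu hv
    exact (fromRel_adj _ u v).mpr ⟨huv, .inl (.inr (.inr (.inl ⟨hu, hv⟩)))⟩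
  · rw [Fin.card_filter_val_lt, min_eq_right (n.sub_le k)]

theorem gammaGraph_adj {n t : ℕ} {u v : Fin n} :
    (GammaGraph n t).Adj u v ↔
      u ≠ v ∧ (u.val < 2 ∨ v.val < 2 ∨ (u.val < n - t ∧ v.val < n - t)) := by
  rw [GammaGraph, fromRel_adj]
  lia

theorem not_isIsolated_gammaGraph {n : ℕ} (t : ℕ) (hn : 2 ≤ n) (v : Fin n) :
    ¬ (GammaGraph n t).IsIsolated v := by
  intro h
  have h0 := h ⟨0, by lia⟩
  have h1 := h ⟨1, by lia⟩
  simp only [gammaGraph_adj, ne_eq, Fin.ext_iff] at h0 h1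
  lia

theorem card_edgeFinset_gammaGraph_le (n t : ℕ) [DecidableRel (GammaGraph n t).Adj] :
    #(GammaGraph n t).edgeFinset ≤ (n - t).choose 2 + 2 * t := by
  set clique : Finset (Fin n) := {v | v.val < n - t} with hclique
  set centers : Finset (Fin n) := {v | v.val < 2} with hcenters
  have hadj : ∀ u v, (GammaGraph n t).Adj u v →
      u ∈ clique ∧ v ∈ clique ∨ u ∈ centers ∧ v ∉ clique ∨ v ∈ centers ∧ u ∉ clique := by
    intro u v
    simp only [gammaGraph_adj, hclique, hcenters, mem_filter_univ]
    lia
  have hclique_card : #clique = n - t := by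
    rw [hclique, Fin.card_filter_val_lt, min_eq_right (n.sub_le t)]
  have hcenters_card : #centers ≤ 2 := by
    rw [hcenters, Fin.card_filter_val_lt]
    exact min_le_right n 2
  have hcompl_card : #cliqueᶜ ≤ t := by
    rw [card_compl, Fintype.card_fin, hclique_card]
    lia
  calc #(GammaGraph n t).edgeFinset ≤ (#clique).choose 2 + #centers * #cliqueᶜ :=
        card_edgeFinset_le_of_forall_adj hadj
    _ ≤ (n - t).choose 2 + 2 * t := by
        rw [hclique_card]
        gcongr

theorem specRad_gammaGraph_two_lt {n : ℕ} (hn : 6 ≤ n) :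
    specRad (GammaGraph n 2) < n - 2 := by
  classical
  have hn' : (6 : ℝ) ≤ n := mod_cast hn
  have hedges : (#(GammaGraph n 2).edgeFinset : ℝ) ≤ (n - 2) * (n - 3) / 2 + 4 := by
    calc (#(GammaGraph n 2).edgeFinset : ℝ) ≤ ((n - 2).choose 2 + 2 * 2 : ℕ) :=
          mod_cast card_edgeFinset_gammaGraph_le n 2
      _ = (n - 2) * (n - 3) / 2 + 4 := by
          push_cast [Nat.cast_choose_two, Nat.cast_sub (by lia : 2 ≤ n)]
          ring
  calc specRad (GammaGraph n 2)
      ≤ √(2 * #(GammaGraph n 2).edgeFinset - Fintype.card (Fin n) + 1) :=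
        specRad_le_sqrt_two_mul_card_edgeFinset (not_isIsolated_gammaGraph 2 (by lia))
    _ < n - 2 := by
        rw [Real.sqrt_lt' (by linarith), Fintype.card_fin]
        linarith

/-- Lemma 3.6: `ρ(L_{n,1}) > ρ(Γ_{n,2})` for `n ≥ 6`. -/
theorem specRad_Gamma2_lt (n : ℕ) (hn : 6 ≤ n) :
    specRad (GammaGraph n 2) < specRad (Lgraph n 1) := by
  have hclique : (Lgraph n 1).IsNClique (n - 2 + 1) {v | v.val < n - 1} := by
    convert isNClique_lgraph n 1 using 1
    lia
  calc specRad (GammaGraph n 2) < n - 2 := specRad_gammaGraph_two_lt hn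
    _ = (n - 2 : ℕ) := by rw [Nat.cast_sub (by lia), Nat.cast_ofNat]
    _ ≤ specRad (Lgraph n 1) := natCast_le_specRad_of_isNClique hclique
end

section
/- For every integer n ≥ 10, q(L_{n,2}) > q(Γ_{n,3}), where q denotes the signless Laplacian spectral radius. -/
open SimpleGraph

/-!
The graph `L_{n,k}` contains a clique on `n - k` vertices with an edge leaving it, so the Rayleigh
quotient of the signless Laplacian at the indicator vector of that clique already exceeds
`2 (n - k - 1)`. For `Γ_{n,t}`, put `m = n - t` and weigh the two vertices of the `K_2` by
`2 (m - 1)`, the clique vertices by `m - 1` and the independent vertices by `2`. Once `3 t ≤ n`,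
the signless Laplacian multiplies no entry of this vector by more than `2 m`, which by
Collatz–Wielandt bounds its spectral radius. For `t = k + 1` the two bounds coincide.
-/

open Finset Matrix

section Spectrum

variable {ι : Type*} [Fintype ι] [DecidableEq ι]

lemma exists_mulVec_eq_smul_of_mem_spectrum {K : Type*} [Field K] {M : Matrix ι ι K} {μ : K}
    (hμ : μ ∈ spectrum K M) : ∃ x : ι → K, x ≠ 0 ∧ M *ᵥ x = μ • x := by
  rw [← spectrum_toLin'] at hμ
  obtain ⟨x, hx⟩ := (Module.End.HasEigenvalue.of_mem_spectrum hμ).exists_hasEigenvector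
  exact ⟨x, hx.2, by simpa using hx.apply_eq_smul⟩

lemma abs_le_of_mem_spectrum_of_mulVec_le {K : Type*} [Field K] [LinearOrder K]
    [IsStrictOrderedRing K] {M : Matrix ι ι K} (hM : ∀ i j, 0 ≤ M i j) {v : ι → K}
    (hv : ∀ i, 0 < v i) {c : K} (hMv : ∀ i, (M *ᵥ v) i ≤ c * v i) {μ : K}
    (hμ : μ ∈ spectrum K M) : |μ| ≤ c := by
  obtain ⟨x, hx, hMx⟩ := exists_mulVec_eq_smul_of_mem_spectrum hμ
  obtain ⟨k, hk⟩ := Function.ne_iff.mp hx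
  obtain ⟨i, -, hi⟩ := univ.exists_max_image (fun i ↦ |x i| / v i) ⟨k, mem_univ k⟩
  set r := |x i| / v i
  have hr_pos : 0 < r := (div_pos (abs_pos.mpr hk) (hv k)).trans_le (hi k (mem_univ k))
  have hx_le (j) : |x j| ≤ r * v j := (div_le_iff₀ (hv j)).mp (hi j (mem_univ j))
  have hx_eq : |x i| = r * v i := (div_mul_cancel₀ _ (hv i).ne').symm
  refine le_of_mul_le_mul_right ?_ (mul_pos hr_pos (hv i))
  calc |μ| * (r * v i) = |(M *ᵥ x) i| := by rw [hMx, Pi.smul_apply, smul_eq_mul, abs_mul, hx_eq]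
    _ ≤ ∑ j, |M i j * x j| := abs_sum_le_sum_abs _ _
    _ ≤ ∑ j, r * (M i j * v j) := by
      refine sum_le_sum fun j _ ↦ ?_
      rw [abs_mul, abs_of_nonneg (hM i j), mul_left_comm]
      exact mul_le_mul_of_nonneg_left (hx_le j) (hM i j)
    _ = r * (M *ᵥ v) i := (mul_sum ..).symm
    _ ≤ r * (c * v i) := mul_le_mul_of_nonneg_left (hMv i) hr_pos.le
    _ = c * (r * v i) := mul_left_comm ..

lemma dotProduct_mulVec_le_sSup_spectrum_mul {M : Matrix ι ι ℝ} (hM : M.IsHermitian)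
    (x : ι → ℝ) : x ⬝ᵥ M *ᵥ x ≤ sSup (spectrum ℝ M) * (x ⬝ᵥ x) := by
  set q := sSup (spectrum ℝ M)
  have hq : (algebraMap ℝ (Matrix ι ι ℝ) q - M).PosSemidef := by
    refine posSemidef_iff_isHermitian_and_spectrum_nonneg.mpr ⟨?_, ?_⟩
    · exact (IsSelfAdjoint.algebraMap _ (.all q)).sub hM
    · rw [← spectrum.singleton_sub_eq]
      rintro _ ⟨_, rfl, μ, hμ, rfl⟩
      exact sub_nonneg.mpr (le_csSup finite_real_spectrum.bddAbove hμ)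
  have := hq.dotProduct_mulVec_nonneg x
  simpa [sub_mulVec, Algebra.algebraMap_eq_smul_one, smul_mulVec] using this

end Spectrum

section SignlessLaplacian

variable {V : Type*} [Fintype V] [DecidableEq V] (G : SimpleGraph V) [DecidableRel G.Adj]

/-- The signless Laplacian matrix `D(G) + A(G)`; over `ℝ` its largest eigenvalue is `qSpecRad G`. -/
def signlessLapMatrix (R : Type*) [AddMonoidWithOne R] : Matrix V V R :=
  G.degMatrix R + G.adjMatrix R

lemma isHermitian_signlessLapMatrix (R : Type*) [NonAssocSemiring R] [StarRing R] :
    (signlessLapMatrix G R).IsHermitian :=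
  (G.isHermitian_degMatrix R).add (G.isHermitian_adjMatrix R)

lemma signlessLapMatrix_mulVec_apply {R : Type*} [NonAssocSemiring R] (x : V → R) (i : V) :
    (signlessLapMatrix G R *ᵥ x) i = ∑ j ∈ G.neighborFinset i, (x i + x j) := by
  rw [signlessLapMatrix, add_mulVec, Pi.add_apply, degMatrix_mulVec_apply,
    adjMatrix_mulVec_apply, sum_add_distrib, sum_const, nsmul_eq_mul, card_neighborFinset_eq_degree]

lemma signlessLapMatrix_mulVec_apply_le {R : Type*} [CommRing R] [PartialOrder R]
    [IsOrderedRing R] {x : V → R} (hx : ∀ i, 0 ≤ x i) {i : V} {K : Finset V} (hi : i ∈ K)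
    (hK : G.neighborFinset i ⊆ K) :
    (signlessLapMatrix G R *ᵥ x) i ≤ (#K - 2) * x i + ∑ j ∈ K, x j := by
  have hK' : G.neighborFinset i ⊆ K.erase i :=
    subset_erase.mpr ⟨hK, G.notMem_neighborFinset_self i⟩
  calc (signlessLapMatrix G R *ᵥ x) i
      = ∑ j ∈ G.neighborFinset i, (x i + x j) := signlessLapMatrix_mulVec_apply G x i
    _ ≤ ∑ j ∈ K.erase i, (x i + x j) :=
      sum_le_sum_of_subset_of_nonneg hK' fun j _ _ ↦ add_nonneg (hx i) (hx j)
    _ = (#K - 2) * x i + ∑ j ∈ K, x j := by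
      rw [sum_erase_eq_sub hi, sum_add_distrib, sum_const, nsmul_eq_mul]
      ring

lemma signlessLapMatrix_nonneg (R : Type*) [Semiring R] [PartialOrder R] [IsOrderedRing R]
    (i j : V) : 0 ≤ signlessLapMatrix G R i j := by
  simp only [signlessLapMatrix, degMatrix, Matrix.add_apply, diagonal_apply, adjMatrix_apply]
  exact add_nonneg (by split_ifs <;> simp) (by split_ifs <;> simp)

end SignlessLaplacian

section SpectralRadius

variable {V : Type} [Fintype V] (G : SimpleGraph V) [DecidableRel G.Adj]

lemma degCount_eq_degree (v : V) : degCount G v = G.degree v :=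
  Nat.card_eq_fintype_card.trans (G.card_neighborSet_eq_degree v)

variable [DecidableEq V]

lemma qSpecRad_eq_sSup_spectrum : qSpecRad G = sSup (spectrum ℝ (signlessLapMatrix G ℝ)) := by
  simp only [qSpecRad, signlessLapMatrix, degMatrix, degCount_eq_degree]
  congr!

lemma qSpecRad_le_of_mulVec_le {v : V → ℝ} (hv : ∀ i, 0 < v i) {c : ℝ} (hc : 0 ≤ c)
    (h : ∀ i, (signlessLapMatrix G ℝ *ᵥ v) i ≤ c * v i) : qSpecRad G ≤ c := by
  rw [qSpecRad_eq_sSup_spectrum]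
  refine Real.sSup_le (fun μ hμ ↦ (le_abs_self μ).trans ?_) hc
  exact abs_le_of_mem_spectrum_of_mulVec_le (signlessLapMatrix_nonneg G ℝ) hv h hμ

lemma sum_degree_add_card_le_qSpecRad_mul_card (S : Finset V) :
    ∑ i ∈ S, (G.degree i + #(G.neighborFinset i ∩ S) : ℝ) ≤ qSpecRad G * #S := by
  have h := dotProduct_mulVec_le_sSup_spectrum_mul (isHermitian_signlessLapMatrix G ℝ)
    (fun i ↦ if i ∈ S then 1 else 0)
  rw [← qSpecRad_eq_sSup_spectrum] at h
  simpa [dotProduct, signlessLapMatrix_mulVec_apply, sum_add_distrib, sum_ite_mem,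
    filter_mem_eq_inter] using h

end SpectralRadius

section Clique

variable {V : Type} {G : SimpleGraph V} {S : Finset V}

lemma card_sub_one_le_card_neighborFinset_inter [Fintype V] [DecidableEq V] [DecidableRel G.Adj]
    (hS : G.IsClique S) {i : V} (hi : i ∈ S) : (#S - 1 : ℝ) ≤ #(G.neighborFinset i ∩ S) := by
  have hsub : S.erase i ⊆ G.neighborFinset i ∩ S := fun j hj ↦ by
    obtain ⟨hji, hj⟩ := mem_erase.mp hj
    exact mem_inter.mpr ⟨(G.mem_neighborFinset i j).mpr (hS hi hj hji.symm), hj⟩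
  rw [sub_le_iff_le_add]
  exact_mod_cast (card_erase_add_one hi).ge.trans (Nat.succ_le_succ (card_le_card hsub))

lemma two_mul_card_sub_one_lt_qSpecRad [Finite V] (hS : G.IsClique S) {u w : V} (hu : u ∈ S)
    (hw : w ∉ S) (huw : G.Adj u w) : 2 * (#S - 1 : ℝ) < qSpecRad G := by
  classical
  have := Fintype.ofFinite V
  have hinter {i : V} (hi : i ∈ S) := card_sub_one_le_card_neighborFinset_inter hS hi
  have hdeg (i : V) : (#(G.neighborFinset i ∩ S) : ℝ) ≤ G.degree i :=
    mod_cast card_le_card inter_subset_left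
  have hdeg_u : (#(G.neighborFinset u ∩ S) : ℝ) < G.degree u := by
    refine mod_cast card_lt_card ((ssubset_iff_of_subset inter_subset_left).mpr ⟨w, ?_, ?_⟩)
    · exact (G.mem_neighborFinset u w).mpr huw
    · exact fun h ↦ hw (mem_of_mem_inter_right h)
  refine lt_of_mul_lt_mul_right (a := (#S : ℝ)) ?_ (Nat.cast_nonneg _)
  calc 2 * (#S - 1 : ℝ) * #S = ∑ _i ∈ S, 2 * (#S - 1 : ℝ) := by
        rw [sum_const, nsmul_eq_mul, mul_comm]
    _ < ∑ i ∈ S, (G.degree i + #(G.neighborFinset i ∩ S) : ℝ) :=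
      sum_lt_sum (fun i hi ↦ by linarith [hinter hi, hdeg i])
        ⟨u, hu, by linarith [hinter hu]⟩
    _ ≤ qSpecRad G * #S := sum_degree_add_card_le_qSpecRad_mul_card G S

end Clique

section HubTail

variable {V : Type} [Fintype V] [DecidableEq V] {H T : Finset V}

/-- The Collatz–Wielandt test vector for a graph in which the vertices of the "tail" `T` are
adjacent only to the vertices of the two-element "hub" `H`. If the graph has all edges that this
allows, the eigenvector equation for the eigenvalue `2 * #Tᶜ` holds at every vertex outside `H`. -/
def hubTailVector (H T : Finset V) (i : V) : ℝ :=
  if i ∈ H then 2 * (#Tᶜ - 1) else if i ∈ T then 2 else #Tᶜ - 1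

lemma hubTailVector_of_mem_hub {i : V} (hi : i ∈ H) : hubTailVector H T i = 2 * (#Tᶜ - 1) :=
  if_pos hi

lemma hubTailVector_of_mem_tail {i : V} (hiH : i ∉ H) (hiT : i ∈ T) : hubTailVector H T i = 2 := by
  rw [hubTailVector, if_neg hiH, if_pos hiT]

lemma hubTailVector_of_notMem {i : V} (hiH : i ∉ H) (hiT : i ∉ T) :
    hubTailVector H T i = #Tᶜ - 1 := by
  rw [hubTailVector, if_neg hiH, if_neg hiT]

lemma one_lt_card_compl_tail (hHT : Disjoint H T) (hH : #H = 2) : 1 < #Tᶜ :=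
  hH.ge.trans (card_le_card (subset_compl_iff_disjoint_right.mpr hHT))

lemma hubTailVector_pos (hT : 1 < #Tᶜ) (i : V) : 0 < hubTailVector H T i := by
  have : (1 : ℝ) < #Tᶜ := mod_cast hT
  unfold hubTailVector
  split_ifs <;> linarith

lemma sum_hubTailVector_hub (hH : #H = 2) : ∑ i ∈ H, hubTailVector H T i = 4 * (#Tᶜ - 1) := by
  rw [sum_congr rfl fun i ↦ hubTailVector_of_mem_hub, sum_const, hH]
  ring

lemma sum_hubTailVector_tail (hHT : Disjoint H T) : ∑ i ∈ T, hubTailVector H T i = 2 * #T := by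
  rw [sum_congr rfl fun i hi ↦ hubTailVector_of_mem_tail (disjoint_right.mp hHT hi) hi, sum_const,
    nsmul_eq_mul, mul_comm]

lemma sum_hubTailVector_compl_tail (hHT : Disjoint H T) (hH : #H = 2) :
    ∑ i ∈ Tᶜ, hubTailVector H T i = (#Tᶜ - 1) * (#Tᶜ + 2) := by
  have hHTc : H ⊆ Tᶜ := subset_compl_iff_disjoint_right.mpr hHT
  have hrest : ∀ i ∈ Tᶜ \ H, hubTailVector H T i = #Tᶜ - 1 := fun i hi ↦
    hubTailVector_of_notMem (mem_sdiff.mp hi).2 (mem_compl.mp (mem_sdiff.mp hi).1)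
  rw [← sum_sdiff hHTc, sum_hubTailVector_hub hH, sum_congr rfl hrest, sum_const, nsmul_eq_mul,
    cast_card_sdiff hHTc, hH]
  push_cast
  ring

variable {G : SimpleGraph V}

lemma signlessLapMatrix_mulVec_hubTailVector_le [DecidableRel G.Adj] (hHT : Disjoint H T)
    (hH : #H = 2) (hG : ∀ ⦃v⦄, v ∈ T → ∀ ⦃w⦄, G.Adj v w → w ∈ H) (hcard : 2 * #T ≤ #Tᶜ)
    (i : V) :
    (signlessLapMatrix G ℝ *ᵥ hubTailVector H T) i ≤ 2 * #Tᶜ * hubTailVector H T i := by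
  have hT := one_lt_card_compl_tail hHT hH
  have hle {K : Finset V} (hi : i ∈ K) (hK : G.neighborFinset i ⊆ K) :=
    signlessLapMatrix_mulVec_apply_le G (fun j ↦ (hubTailVector_pos (H := H) hT j).le) hi hK
  by_cases hiH : i ∈ H
  · have h := hle (mem_univ i) (subset_univ _)
    rw [← sum_add_sum_compl T, sum_hubTailVector_tail hHT, sum_hubTailVector_compl_tail hHT hH,
      hubTailVector_of_mem_hub hiH, card_univ, ← card_compl_add_card T, Nat.cast_add] at h
    rw [hubTailVector_of_mem_hub hiH]
    have hT' : (2 : ℝ) ≤ #Tᶜ := mod_cast hT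
    have hcard' : (2 * #T : ℝ) ≤ #Tᶜ := mod_cast hcard
    nlinarith
  by_cases hiT : i ∈ T
  · have h := hle (mem_insert_self i H) fun j hj ↦
      mem_insert_of_mem (hG hiT ((G.mem_neighborFinset i j).mp hj))
    rw [sum_insert hiH, sum_hubTailVector_hub hH, card_insert_of_notMem hiH, hH,
      hubTailVector_of_mem_tail hiH hiT] at h
    rw [hubTailVector_of_mem_tail hiH hiT]
    push_cast at h
    linarith
  · have h := hle (mem_compl.mpr hiT) fun j hj ↦ mem_compl.mpr fun hjT ↦
      hiH (hG hjT ((G.mem_neighborFinset i j).mp hj).symm)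
    rw [sum_hubTailVector_compl_tail hHT hH, hubTailVector_of_notMem hiH hiT] at h
    rw [hubTailVector_of_notMem hiH hiT]
    linarith

lemma qSpecRad_le_two_mul_card_compl (hHT : Disjoint H T) (hH : #H = 2)
    (hG : ∀ ⦃v⦄, v ∈ T → ∀ ⦃w⦄, G.Adj v w → w ∈ H) (hcard : 2 * #T ≤ #Tᶜ) :
    qSpecRad G ≤ 2 * #Tᶜ := by
  classical
  exact qSpecRad_le_of_mulVec_le G (hubTailVector_pos (one_lt_card_compl_tail hHT hH))
    (by positivity) (signlessLapMatrix_mulVec_hubTailVector_le hHT hH hG hcard)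

end HubTail

lemma two_mul_sub_lt_qSpecRad_Lgraph {n k : ℕ} (hk : 1 ≤ k) (hkn : k < n) :
    2 * ((n : ℝ) - k - 1) < qSpecRad (Lgraph n k) := by
  let S : Finset (Fin n) := {i | i.val < n - k}
  have hS : (#S : ℝ) = n - k := by
    rw [Fin.card_filter_val_lt, min_eq_right (Nat.sub_le n k), Nat.cast_sub hkn.le]
  have hclique : (Lgraph n k).IsClique S := fun i hi j hj hij ↦ by
    simp_all [S, Lgraph]
  rw [← hS]
  refine two_mul_card_sub_one_lt_qSpecRad hclique (u := ⟨0, by omega⟩) (w := ⟨n - 1, by omega⟩)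
    ?_ ?_ ?_
  · simpa [S] using hkn
  · simp only [S, mem_filter_univ]
    omega
  · simp only [Lgraph, fromRel_adj, ne_eq, Fin.mk.injEq, true_or, and_true]
    omega

lemma qSpecRad_GammaGraph_le {n t : ℕ} (htn : t + 2 ≤ n) (hn : 3 * t ≤ n) :
    qSpecRad (GammaGraph n t) ≤ 2 * ((n : ℝ) - t) := by
  let H : Finset (Fin n) := {i | i.val < 2}
  let T : Finset (Fin n) := {i | n - t ≤ i.val}
  have hTc : #Tᶜ = n - t := by
    simp only [T, compl_filter, not_le, Fin.card_filter_val_lt]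
    omega
  have hT : #T = t := by
    have := card_compl_add_card T
    rw [hTc, Fintype.card_fin] at this
    omega
  have hHT : Disjoint H T := by
    simp only [Finset.disjoint_left, H, T, mem_filter_univ]
    omega
  have hH : #H = 2 := by
    rw [Fin.card_filter_val_lt]
    omega
  have hadj : ∀ ⦃v⦄, v ∈ T → ∀ ⦃w⦄, (GammaGraph n t).Adj v w → w ∈ H := by
    intro v hv w hvw
    simp only [H, T, mem_filter_univ, GammaGraph, fromRel_adj] at *
    omega
  have hle := qSpecRad_le_two_mul_card_compl hHT hH hadj (by omega)
  rwa [hTc, Nat.cast_sub (by omega)] at hle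

theorem qSpecRad_Gamma3_lt_general (n k : ℕ) (hk : 1 ≤ k) (hn : 3 * (k + 1) ≤ n) :
    qSpecRad (GammaGraph n (k + 1)) < qSpecRad (Lgraph n k) := by
  calc qSpecRad (GammaGraph n (k + 1)) ≤ 2 * ((n : ℝ) - (k + 1 : ℕ)) :=
        qSpecRad_GammaGraph_le (by omega) hn
    _ = 2 * ((n : ℝ) - k - 1) := by push_cast; ring
    _ < qSpecRad (Lgraph n k) := two_mul_sub_lt_qSpecRad_Lgraph hk (by omega)

/-- Lemma 3.6: `q(L_{n,2}) > q(Γ_{n,3})` for `n ≥ 10`. -/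
theorem qSpecRad_Gamma3_lt (n : ℕ) (hn : 10 ≤ n) :
    qSpecRad (GammaGraph n 3) < qSpecRad (Lgraph n 2) :=
  qSpecRad_Gamma3_lt_general n 2 one_le_two (by omega)
end
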